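/- Under the algorithmic setting and local assumptions below, let c be the constant of the bound ‖d^k‖ ≤ c·dist(x^k, X*) (namely c := ν_min⁻¹ θ (2 + L_g)^{1+τ−δ} (1 + L_g + aL + ν̄(2 + L_g)^δ) + (L + 2aL)/(2ν_min β) + 2), and define ε₂ := min{1/(2 + L_g), 1/(a L_ψ ‖A‖), ε₀/(1 + c)}, ĉ := (c²L + 2acL_ψ‖A‖³ + 2βc ν̄)/(2β²) + θ, and c̃ := (1/β)·(c²L/2 + a c L_ψ ‖A‖³ + c ν̄ (2 + L_g)^δ + θ(2 + L_g)^{1+τ})^q. Then for every k ∈ K with x^k ∈ B_{ε₂}(x*): ‖r(x̂^k)‖ ≤ ĉ·‖r(x^k)‖^{min{δ+q, 1+τ}} and dist(x̂^k, X*) ≤ c̃·dist(x^k, X*)^{(1+δ)q}. -/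

import Mathlib

open scoped RealInnerProductSpace
open Filter Metric

noncomputable section

/-- The convex subdifferential of `g` at `y`. -/
def subdiff {n : ℕ} (g : EuclideanSpace ℝ (Fin n) → ℝ) (y : EuclideanSpace ℝ (Fin n)) :
    Set (EuclideanSpace ℝ (Fin n)) :=
  {v | ∀ z, g y + ⟪v, z - y⟫ ≤ g z}

/-- The proximity operator `prox_g(z)`, the (unique, for convex `g`) minimizer of
`y ↦ g y + (1/2)‖y − z‖²`. -/
noncomputable def proxPt {n : ℕ} (g : EuclideanSpace ℝ (Fin n) → ℝ)
    (z : EuclideanSpace ℝ (Fin n)) : EuclideanSpace ℝ (Fin n) :=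
  Classical.epsilon fun p => ∀ y, g p + (1 / 2) * ‖p - z‖ ^ 2 ≤ g y + (1 / 2) * ‖y - z‖ ^ 2

/-- The residual (prox-gradient) mapping `r(x) = x − prox_φ(x − ∇f(x))`. -/
noncomputable def resid {n : ℕ} (f φ : EuclideanSpace ℝ (Fin n) → ℝ)
    (x : EuclideanSpace ℝ (Fin n)) : EuclideanSpace ℝ (Fin n) :=
  x - proxPt φ (x - gradient f x)

/-- The smallest eigenvalue of a symmetric operator on ℝᵐ, as the infimum of its quadratic
form over the unit sphere. -/
noncomputable def lambdaMin {m : ℕ} (T : EuclideanSpace ℝ (Fin m) →L[ℝ] EuclideanSpace ℝ (Fin m)) :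
    ℝ :=
  ⨅ u : {u : EuclideanSpace ℝ (Fin m) // ‖u‖ = 1}, ⟪T u.1, u.1⟫

lemma aux_quad_exists {n : ℕ} (φ : EuclideanSpace ℝ (Fin n) → ℝ)
    (hφ : ConvexOn ℝ Set.univ φ) (hcont : Continuous φ)
    (p v : EuclideanSpace ℝ (Fin n)) (hv : v ∈ subdiff φ p)
    (G : EuclideanSpace ℝ (Fin n) →L[ℝ] EuclideanSpace ℝ (Fin n))
    (hsym : ∀ u w, ⟪G u, w⟫ = ⟪G w, u⟫) (μ : ℝ) (hμ : 0 < μ)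
    (hG : ∀ u, μ * ‖u‖ ^ 2 ≤ ⟪G u, u⟫) (g x : EuclideanSpace ℝ (Fin n)) :
    ∃ y, -(g + G (y - x)) ∈ subdiff φ y := by
  set Φ : EuclideanSpace ℝ (Fin n) → ℝ := fun y => φ y + ⟪g, y - x⟫ + (1/2) * ⟪G (y - x), y - x⟫ with hΦ
  have hΦc : Continuous Φ := by
    have h1 : Continuous fun y => G (y - x) := by fun_prop
    have h2 : Continuous fun y : EuclideanSpace ℝ (Fin n) => y - x := by fun_prop
    exact (hcont.add (continuous_const.inner h2)).add (continuous_const.mul (h1.inner h2))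
  set B := ‖v‖ + ‖g‖
  set C := φ x - φ p - ⟪v, x - p⟫
  have hC : 0 ≤ C := by have := hv x; simp only [C]; linarith
  have hB : 0 ≤ B := by positivity
  set ρ := 2 * (B + C) / μ + 1
  have hρ : 1 ≤ ρ := by
    have : 0 ≤ 2 * (B + C) / μ := by positivity
    simp only [ρ]; linarith
  obtain ⟨y0, hy0m, hy0⟩ := (isCompact_closedBall x ρ).exists_isMinOn
    ⟨x, mem_closedBall_self (by linarith)⟩ hΦc.continuousOn
  have hmin : ∀ y, Φ y0 ≤ Φ y := by
    intro y
    by_cases hy : y ∈ closedBall x ρ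
    · exact hy0 hy
    · have h1 : Φ y0 ≤ Φ x := hy0 (mem_closedBall_self (by linarith))
      refine h1.trans ?_
      rw [mem_closedBall, dist_eq_norm, not_le] at hy
      set s := ‖y - x‖
      have h2 : Φ x = φ x := by simp [hΦ]
      have h3 := hv y
      have h4 : ⟪v, y - p⟫ = ⟪v, y - x⟫ + ⟪v, x - p⟫ := by
        rw [← inner_add_right]; congr 1; abel
      have h5 : -(‖v‖ * s) ≤ ⟪v, y - x⟫ := (abs_le.1 (abs_real_inner_le_norm _ _)).1
      have h6 : -(‖g‖ * s) ≤ ⟪g, y - x⟫ := (abs_le.1 (abs_real_inner_le_norm _ _)).1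
      have h7 := hG (y - x)
      have h8 : B + C ≤ μ / 2 * s := by
        have : 2 * (B + C) / μ ≤ s := by simp only [ρ] at hy; linarith
        rw [div_le_iff₀ hμ] at this; linarith
      have h9 : (B + C) * s ≤ μ / 2 * s * s := by
        apply mul_le_mul_of_nonneg_right h8; linarith
      have h10 : C ≤ C * s := by nlinarith
      rw [h2]
      simp only [hΦ]
      have : C = φ x - φ p - ⟪v, x - p⟫ := rfl
      have : B * s = ‖v‖ * s + ‖g‖ * s := by simp only [B]; ring
      have : ‖y - x‖ ^ 2 = s * s := by simp only [s]; ring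
      rw [this] at h7
      nlinarith
  refine ⟨y0, fun z => ?_⟩
  set h := z - y0
  have key : ∀ t : ℝ, 0 < t → t < 1 →
      0 ≤ (φ z - φ y0 + ⟪g + G (y0 - x), h⟫) + t * ((1/2) * ⟪G h, h⟫) := by
    intro t ht ht1
    have h1 := hmin (y0 + t • h)
    have h2 : φ (y0 + t • h) ≤ (1 - t) * φ y0 + t * φ z := by
      have := hφ.2 (Set.mem_univ y0) (Set.mem_univ z) (by linarith : 0 ≤ 1 - t) ht.le (by ring)
      have e : y0 + t • h = (1 - t) • y0 + t • z := by simp only [h]; module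
      rw [e]; simpa using this
    have e : y0 + t • h - x = (y0 - x) + t • h := by abel
    have h3 := hsym h (y0 - x)
    simp only [hΦ, e, map_add, map_smul, inner_add_left, inner_add_right, inner_smul_left,
      inner_smul_right, RCLike.conj_to_real] at h1
    have h4 : 0 ≤ t * ((φ z - φ y0 + ⟪g + G (y0 - x), h⟫) + t * ((1/2) * ⟪G h, h⟫)) := by
      rw [inner_add_left]
      rw [h3] at h1
      nlinarith
    exact nonneg_of_mul_nonneg_right h4 ht
  have h5 : 0 ≤ φ z - φ y0 + ⟪g + G (y0 - x), h⟫ := by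
    have ht : Tendsto (fun t : ℝ => (φ z - φ y0 + ⟪g + G (y0 - x), h⟫) + t * ((1/2) * ⟪G h, h⟫))
        (nhdsWithin 0 (Set.Ioi 0)) (nhds ((φ z - φ y0 + ⟪g + G (y0 - x), h⟫) + 0 * ((1/2) * ⟪G h, h⟫))) := by
      apply Tendsto.mono_left _ nhdsWithin_le_nhds
      apply Continuous.tendsto
      fun_prop
    rw [zero_mul, add_zero] at ht
    refine ge_of_tendsto ht ?_
    filter_upwards [Ioo_mem_nhdsGT (zero_lt_one' ℝ)] with t h
    exact key t h.1 h.2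
  rw [inner_neg_left]
  linarith

lemma aux_prox {n : ℕ} (φ : EuclideanSpace ℝ (Fin n) → ℝ)
    (hφ : ConvexOn ℝ Set.univ φ) (hcont : Continuous φ)
    (p v : EuclideanSpace ℝ (Fin n)) (hv : v ∈ subdiff φ p) (z : EuclideanSpace ℝ (Fin n)) :
    z - proxPt φ z ∈ subdiff φ (proxPt φ z) := by
  obtain ⟨y, hy⟩ := aux_quad_exists φ hφ hcont p v hv (ContinuousLinearMap.id ℝ _)
    (fun u w => real_inner_comm _ _) 1 one_pos (fun u => by simp) 0 z
  have hy' : ∀ w, φ y + (1/2) * ‖y - z‖ ^ 2 + (1/2) * ‖w - y‖ ^ 2 ≤ φ w + (1/2) * ‖w - z‖^2 := by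
    intro w
    have h1 := hy w
    have e : w - z = (w - y) + (y - z) := by abel
    have h2 := norm_add_sq_real (w - y) (y - z)
    rw [← e] at h2
    simp only [zero_add, ContinuousLinearMap.id_apply, inner_neg_left] at h1
    rw [real_inner_comm] at h1
    linarith
  have hex : ∃ p, ∀ w, φ p + (1 / 2) * ‖p - z‖ ^ 2 ≤ φ w + (1 / 2) * ‖w - z‖ ^ 2 :=
    ⟨y, fun w => by have := hy' w; nlinarith [sq_nonneg ‖w - y‖]⟩
  have hs : ∀ w, φ (proxPt φ z) + (1 / 2) * ‖proxPt φ z - z‖ ^ 2 ≤ φ w + (1 / 2) * ‖w - z‖ ^ 2 :=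
    Classical.epsilon_spec hex
  have h1 := hs y
  have h2 := hy' (proxPt φ z)
  have h3 : ‖proxPt φ z - y‖ = 0 := by
    have : ‖proxPt φ z - y‖ ^ 2 ≤ 0 := by linarith
    exact pow_eq_zero_iff (two_ne_zero) |>.1 (le_antisymm this (sq_nonneg _))
  rw [norm_sub_eq_zero_iff] at h3
  rw [h3]
  have e : z - y = -(0 + (ContinuousLinearMap.id ℝ (EuclideanSpace ℝ (Fin n))) (y - z)) := by simp
  rw [e]; exact hy

lemma aux_mono {n : ℕ} (φ : EuclideanSpace ℝ (Fin n) → ℝ)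
    (p v p' v' : EuclideanSpace ℝ (Fin n)) (hv : v ∈ subdiff φ p) (hv' : v' ∈ subdiff φ p') :
    0 ≤ ⟪v - v', p - p'⟫ := by
  have h1 := hv p'
  have h2 := hv' p
  have e : ⟪v, p' - p⟫ = - ⟪v, p - p'⟫ := by rw [← inner_neg_right]; congr 1; abel
  rw [inner_sub_left]; linarith

lemma aux_nonexp {n : ℕ} (φ : EuclideanSpace ℝ (Fin n) → ℝ)
    (p v p' v' : EuclideanSpace ℝ (Fin n)) (hv : v - p ∈ subdiff φ p)
    (hv' : v' - p' ∈ subdiff φ p') : ‖p - p'‖ ≤ ‖v - v'‖ := by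
  have h := aux_mono φ _ _ _ _ hv hv'
  have e : v - p - (v' - p') = (v - v') - (p - p') := by abel
  rw [e, inner_sub_left, real_inner_self_eq_norm_sq] at h
  have h2 := real_inner_le_norm (v - v') (p - p')
  by_contra hc
  push Not at hc
  nlinarith [norm_nonneg (v - v'), norm_nonneg (p - p')]

/-- Bound for inexact solutions. -/
lemma aux_inexact {n : ℕ} (φ : EuclideanSpace ℝ (Fin n) → ℝ)
    (G : EuclideanSpace ℝ (Fin n) →L[ℝ] EuclideanSpace ℝ (Fin n))
    (μ : ℝ) (hμ : 0 < μ)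
    (hG : ∀ u, μ * ‖u‖ ^ 2 ≤ ⟪G u, u⟫) (g x y w R : EuclideanSpace ℝ (Fin n))
    (hy : -(g + G (y - x)) ∈ subdiff φ y)
    (hw : R - (g + G (w - x)) ∈ subdiff φ (w - R)) : μ * ‖w - y‖ ≤ (1 + ‖G‖) * ‖R‖ := by
  have h := aux_mono φ _ _ _ _ hw hy
  set h' := w - y
  have e1 : R - (g + G (w - x)) - -(g + G (y - x)) = R - G h' := by
    simp only [h', map_sub]; abel
  have e2 : w - R - y = h' - R := by simp only [h']; abel
  rw [e1, e2, inner_sub_left, inner_sub_right R h' R, inner_sub_right (G h') h' R,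
    real_inner_self_eq_norm_sq] at h
  have h1 := hG h'
  have h2 := real_inner_le_norm R h'
  have h3 := real_inner_le_norm (G h') R
  have h4 := G.le_opNorm h'
  have h5 : ‖G h'‖ * ‖R‖ ≤ ‖G‖ * ‖h'‖ * ‖R‖ := by gcongr
  by_contra hc
  push Not at hc
  have hp : 0 < ‖h'‖ := by
    have : 0 < μ * ‖h'‖ := lt_of_le_of_lt (by positivity) hc
    exact (mul_pos_iff_of_pos_left hμ).1 this
  nlinarith [sq_nonneg ‖R‖]

lemma aux_exact {n : ℕ} (φ : EuclideanSpace ℝ (Fin n) → ℝ)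
    (G : EuclideanSpace ℝ (Fin n) →L[ℝ] EuclideanSpace ℝ (Fin n))
    (μ : ℝ) (hμ : 0 < μ)
    (hG : ∀ u, μ * ‖u‖ ^ 2 ≤ ⟪G u, u⟫) (g x y z gz : EuclideanSpace ℝ (Fin n))
    (hy : -(g + G (y - x)) ∈ subdiff φ y)
    (hz : -gz ∈ subdiff φ z) : μ * ‖y - z‖ ≤ ‖gz - g - G (z - x)‖ := by
  have h := aux_mono φ _ _ _ _ hy hz
  have e1 : -(g + G (y - x)) - -gz = (gz - g - G (z - x)) - G (y - z) := by
    simp only [map_sub]; abel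
  rw [e1, inner_sub_left] at h
  have h1 := hG (y - z)
  have h2 := real_inner_le_norm (gz - g - G (z - x)) (y - z)
  by_contra hc
  push Not at hc
  have hp : 0 < ‖y - z‖ := by
    have : 0 < μ * ‖y - z‖ := lt_of_le_of_lt (by positivity) hc
    exact (mul_pos_iff_of_pos_left hμ).1 this
  nlinarith

lemma aux_lambda {m : ℕ} (T : EuclideanSpace ℝ (Fin m) →L[ℝ] EuclideanSpace ℝ (Fin m))
    (u : EuclideanSpace ℝ (Fin m)) : lambdaMin T * ‖u‖ ^ 2 ≤ ⟪T u, u⟫ := by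
  by_cases hu : u = 0
  · simp [hu]
  have hn : ‖u‖ ≠ 0 := norm_ne_zero_iff.2 hu
  have h1 : lambdaMin T ≤ ⟪T (‖u‖⁻¹ • u), ‖u‖⁻¹ • u⟫ := by
    refine ciInf_le (f := fun u : {u : EuclideanSpace ℝ (Fin m) // ‖u‖ = 1} => ⟪T u.1, u.1⟫)
      ⟨-‖T‖, ?_⟩ ⟨‖u‖⁻¹ • u, by rw [norm_smul]; simp [hn]⟩
    rintro _ ⟨⟨w, hw⟩, rfl⟩
    have := (abs_le.1 (abs_real_inner_le_norm (T w) w)).1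
    have h2 := T.le_opNorm w
    simp only [hw, mul_one] at *
    linarith
  rw [map_smul, inner_smul_left, inner_smul_right] at h1
  simp only [RCLike.conj_to_real] at h1
  calc lambdaMin T * ‖u‖ ^ 2 ≤ (‖u‖⁻¹ * (‖u‖⁻¹ * ⟪T u, u⟫)) * ‖u‖ ^ 2 := by gcongr
    _ = ⟪T u, u⟫ := by field_simp

lemma aux_lambda_ge {m : ℕ} (T S : EuclideanSpace ℝ (Fin m) →L[ℝ] EuclideanSpace ℝ (Fin m))
    (hS : ∀ u, 0 ≤ ⟪S u, u⟫) : max (-(lambdaMin T)) 0 ≤ ‖T - S‖ := by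
  refine max_le ?_ (norm_nonneg _)
  rw [neg_le]
  unfold lambdaMin
  by_cases hne : Nonempty {u : EuclideanSpace ℝ (Fin m) // ‖u‖ = 1}
  · refine le_ciInf ?_
    rintro ⟨u, hu⟩
    have h1 := (abs_le.1 (abs_real_inner_le_norm ((T - S) u) u)).1
    have h2 := (T - S).le_opNorm u
    have h3 := hS u
    have e : ⟪(T - S) u, u⟫ = ⟪T u, u⟫ - ⟪S u, u⟫ := by
      rw [sub_apply, inner_sub_left]
    simp only [hu, mul_one] at *
    linarith
  · have : IsEmpty {u : EuclideanSpace ℝ (Fin m) // ‖u‖ = 1} := not_nonempty_iff.1 hne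
    rw [Real.iInf_of_isEmpty]
    simp

lemma aux_taylor {n : ℕ} (g : EuclideanSpace ℝ (Fin n) → EuclideanSpace ℝ (Fin n))
    (hg : Differentiable ℝ g) (s : Set (EuclideanSpace ℝ (Fin n))) (hs : Convex ℝ s) (L : ℝ)
    (hL : ∀ u ∈ s, ∀ v ∈ s, ‖fderiv ℝ g u - fderiv ℝ g v‖ ≤ L * ‖u - v‖)
    (x y : EuclideanSpace ℝ (Fin n)) (hx : x ∈ s) (hy : y ∈ s) :
    ‖g y - g x - fderiv ℝ g x (y - x)‖ ≤ L / 2 * ‖y - x‖ ^ 2 := by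
  set d := y - x
  set h : ℝ → EuclideanSpace ℝ (Fin n) := fun t => g (x + t • d) - g x - t • fderiv ℝ g x d
  have hd : ∀ t, HasDerivAt h (fderiv ℝ g (x + t • d) d - fderiv ℝ g x d) t := by
    intro t
    have h1 : HasDerivAt (fun t : ℝ => x + t • d) d t := by
      simpa using ((hasDerivAt_id t).smul_const d).const_add x
    have h2 := (hg (x + t • d)).hasFDerivAt.comp_hasDerivAt t h1
    have h3 : HasDerivAt (fun t : ℝ => t • fderiv ℝ g x d) (fderiv ℝ g x d) t := by
      simpa using (hasDerivAt_id t).smul_const (fderiv ℝ g x d)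
    exact (h2.sub_const (g x)).sub h3
  have hB : ∀ t : ℝ, HasDerivAt (fun t : ℝ => L / 2 * ‖d‖ ^ 2 * t ^ 2) (L * ‖d‖ ^ 2 * t) t := by
    intro t
    have := ((hasDerivAt_id t).pow 2).const_mul (L / 2 * ‖d‖ ^ 2)
    refine this.congr_deriv ?_
    simp; ring
  have := image_norm_le_of_norm_deriv_right_le_deriv_boundary (f := h) (a := 0) (b := 1)
    (fun t _ => (hd t).continuousAt.continuousWithinAt) (fun t _ => (hd t).hasDerivWithinAt)
    (B := fun t : ℝ => L / 2 * ‖d‖ ^ 2 * t ^ 2) (by simp [h]) hB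
    (fun t ht => by
      have hm : x + t • d ∈ s := hs.add_smul_sub_mem hx hy ⟨ht.1, ht.2.le⟩
      have h1 := hL _ hm _ hx
      rw [← sub_apply]
      refine (ContinuousLinearMap.le_opNorm _ _).trans ?_
      have h2 : ‖x + t • d - x‖ = t * ‖d‖ := by
        rw [add_sub_cancel_left, norm_smul, Real.norm_of_nonneg ht.1]
      rw [h2] at h1
      calc _ ≤ L * (t * ‖d‖) * ‖d‖ := by gcongr
        _ = _ := by ring)
    (Set.right_mem_Icc.2 zero_le_one)
  simpa [h, d] using this

lemma aux_grad {n m : ℕ} (ψ : EuclideanSpace ℝ (Fin m) → ℝ)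
    (A : EuclideanSpace ℝ (Fin n) →L[ℝ] EuclideanSpace ℝ (Fin m))
    (b : EuclideanSpace ℝ (Fin m)) (hψ : ContDiff ℝ 2 ψ)
    (f : EuclideanSpace ℝ (Fin n) → ℝ) (hf : ∀ y, f y = ψ (A y - b)) :
    ContDiff ℝ 1 (gradient ψ) ∧
    (∀ z u w, ⟪fderiv ℝ (gradient ψ) z u, w⟫ = ⟪fderiv ℝ (gradient ψ) z w, u⟫) ∧
    (∀ y, HasFDerivAt (gradient f)
      ((ContinuousLinearMap.adjoint A).comp ((fderiv ℝ (gradient ψ) (A y - b)).comp A)) y) := by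
  have hc1 : ContDiff ℝ 1 (fderiv ℝ ψ) := hψ.fderiv_right (by norm_num)
  have hgc : ContDiff ℝ 1 (gradient ψ) := by
    have : gradient ψ = fun z => (InnerProductSpace.toDual ℝ _).symm (fderiv ℝ ψ z) := rfl
    rw [this]
    exact (InnerProductSpace.toDual ℝ (EuclideanSpace ℝ (Fin m))).symm.toContinuousLinearEquiv.contDiff.comp hc1
  have hin : ∀ z w, ⟪gradient ψ z, w⟫ = fderiv ℝ ψ z w := by
    intro z w
    simp [gradient]
  refine ⟨hgc, ?_, ?_⟩
  · have key : ∀ z u w, ⟪fderiv ℝ (gradient ψ) z u, w⟫ = fderiv ℝ (fderiv ℝ ψ) z u w := by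
      intro z u w
      have h1 : HasFDerivAt (gradient ψ) (fderiv ℝ (gradient ψ) z) z :=
        (hgc.differentiable (by norm_num) z).hasFDerivAt
      have h2 : HasFDerivAt (fderiv ℝ ψ) (fderiv ℝ (fderiv ℝ ψ) z) z :=
        (hc1.differentiable (by norm_num) z).hasFDerivAt
      have h3 := h1.inner ℝ (hasFDerivAt_const w z)
      have h4 := h2.clm_apply (hasFDerivAt_const w z)
      have h5 : (fun z => ⟪gradient ψ z, w⟫) = fun z => fderiv ℝ ψ z w := by
        funext z; exact hin z w
      rw [h5] at h3
      have := DFunLike.congr_fun (h3.unique h4) u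
      simpa using this
    intro z u w
    rw [key, key]
    exact (hψ.contDiffAt.isSymmSndFDerivAt (by simp)) u w
  · have hgf : gradient f = fun y => ContinuousLinearMap.adjoint A (gradient ψ (A y - b)) := by
      funext y
      apply ext_inner_right ℝ
      intro w
      rw [ContinuousLinearMap.adjoint_inner_left, hin]
      have h1 : HasFDerivAt ψ (fderiv ℝ ψ (A y - b)) (A y - b) :=
        (hψ.differentiable (by norm_num) _).hasFDerivAt
      have h2 : HasFDerivAt (fun y => A y - b) A y := A.hasFDerivAt.sub_const b
      have h3 : HasFDerivAt f ((fderiv ℝ ψ (A y - b)).comp A) y := by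
        have : f = ψ ∘ fun y => A y - b := by funext y; simp [hf]
        rw [this]; exact h1.comp y h2
      simp [gradient, h3.fderiv]
    intro y
    rw [hgf]
    have h1 : HasFDerivAt (gradient ψ) (fderiv ℝ (gradient ψ) (A y - b)) (A y - b) :=
      (hgc.differentiable (by norm_num) _).hasFDerivAt
    have h2 : HasFDerivAt (fun y => A y - b) A y := A.hasFDerivAt.sub_const b
    have h3 : HasFDerivAt (fun y => gradient ψ (A y - b))
        ((fderiv ℝ (gradient ψ) (A y - b)).comp A) y :=
      HasFDerivAt.comp (g := gradient ψ) (f := fun y => A y - b) y h1 h2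
    exact (ContinuousLinearMap.adjoint A).hasFDerivAt.comp y h3

lemma aux_seq (σ₁ σ₂ η νmin ν₀ νbar c₂ : ℝ) (hσ₂ : 1 < σ₂)
    (hη : 0 < η) (hη' : η < 1) (hνmin : 0 < νmin) (hν₀a : νmin ≤ ν₀) (hν₀b : ν₀ ≤ νbar)
    (ν rbar ρ rn : ℕ → ℝ) (hrn : ∀ k, 0 < rn k)
    (hν0 : ν 0 = ν₀) (hrbar0 : rbar 0 = rn 0)
    (unsucc : ℕ → Prop)
    (h1 : ∀ k, unsucc k → rn (k + 1) = rn k ∧ ν (k + 1) = σ₂ * ν k)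
    (h2 : ∀ k, ¬ unsucc k → (ρ k ≤ c₂ → ν (k + 1) = min (ν k) νbar) ∧
          (c₂ < ρ k → ν (k + 1) = min (max (σ₁ * ν k) νmin) νbar))
    (hrbarupd : ∀ k,
        (rn (k + 1) ≤ η * rbar k → rbar (k + 1) = rn (k + 1)) ∧
        (¬ rn (k + 1) ≤ η * rbar k → rbar (k + 1) = rbar k)) (k : ℕ)
    (hk : k = 0 ∨ (1 ≤ k ∧ rn k ≤ η * rbar (k - 1))) :
    rbar k = rn k ∧ νmin ≤ ν k ∧ ν k ≤ νbar := by
  have inv : ∀ k, η * rbar k < rn k := by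
    intro k
    cases k with
    | zero => rw [hrbar0]; nlinarith [hrn 0]
    | succ k =>
      by_cases h : rn (k + 1) ≤ η * rbar k
      · rw [(hrbarupd k).1 h]; nlinarith [hrn (k + 1)]
      · rw [(hrbarupd k).2 h]; exact not_le.1 h
  have hνge : ∀ k, νmin ≤ ν k := by
    intro k
    induction k with
    | zero => rw [hν0]; exact hν₀a
    | succ k ih =>
      by_cases h : unsucc k
      · rw [(h1 k h).2]; nlinarith
      · rcases le_or_gt (ρ k) c₂ with h3 | h3
        · rw [(h2 k h).1 h3]; exact le_min ih (hν₀a.trans hν₀b)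
        · rw [(h2 k h).2 h3]; exact le_min (le_max_right _ _) (hν₀a.trans hν₀b)
  rcases hk with rfl | ⟨hk1, hk2⟩
  · exact ⟨hrbar0, hνge 0, hν0.trans_le hν₀b⟩
  · obtain ⟨j, rfl⟩ : ∃ j, k = j + 1 := ⟨k - 1, by omega⟩
    simp only [Nat.add_sub_cancel] at hk2
    refine ⟨(hrbarupd j).1 hk2, hνge _, ?_⟩
    have hs : ¬ unsucc j := by
      intro h
      rw [(h1 j h).1] at hk2
      exact absurd (inv j) (not_lt.2 hk2)
    rcases le_or_gt (ρ j) c₂ with h3 | h3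
    · rw [(h2 j hs).1 h3]; exact min_le_right _ _
    · rw [(h2 j hs).2 h3]; exact min_le_right _ _

set_option maxHeartbeats 4000000 in
/-- Lemma 5.6: with `c` as in Lemma 5.5, `ε₂ = min{1/(2+L_g), 1/(aL_ψ‖A‖), ε₀/(1+c)}`,
`ĉ = (c²L + 2acL_ψ‖A‖³ + 2βcν̄)/(2β²) + θ` and
`c̃ = (1/β)(c²L/2 + acL_ψ‖A‖³ + cν̄(2+L_g)^δ + θ(2+L_g)^{1+τ})^q`, for every `k ∈ K` with
`xᵏ ∈ B_{ε₂}(x*)`: `‖r(x̂ᵏ)‖ ≤ ĉ‖r(xᵏ)‖^{min{δ+q, 1+τ}}` and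
`dist(x̂ᵏ, X*) ≤ c̃·dist(xᵏ, X*)^{(1+δ)q}`. -/
theorem stmt_17 {n m : ℕ}
    -- problem data: f(x) = ψ(Ax − b), F = f + φ bounded below, φ convex, ψ C²
    (ψ : EuclideanSpace ℝ (Fin m) → ℝ)
    (A : EuclideanSpace ℝ (Fin n) →L[ℝ] EuclideanSpace ℝ (Fin m))
    (b : EuclideanSpace ℝ (Fin m))
    (φ : EuclideanSpace ℝ (Fin n) → ℝ)
    (hψ : ContDiff ℝ 2 ψ) (hφ : ConvexOn ℝ Set.univ φ)
    (f F : EuclideanSpace ℝ (Fin n) → ℝ)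
    (hf : ∀ y, f y = ψ (A y - b)) (hF : ∀ y, F y = f y + φ y)
    (hFbdd : BddBelow (Set.range F))
    -- algorithm parameters
    (c₁ c₂ σ₁ σ₂ η θ α a νmin ν₀ νbar δ τ pmin κ : ℝ)
    (hc₁ : 0 < c₁) (hc₁' : c₁ < 1) (hc₂ : c₁ < c₂) (hc₂' : c₂ < 1)
    (hσ₁ : 0 < σ₁) (hσ₁' : σ₁ < 1) (hσ₂ : 1 < σ₂)
    (hη : 0 < η) (hη' : η < 1) (hθ : 0 < θ) (hθ' : θ < 1)
    (hα : 0 < α) (hα' : α < 1) (ha : 1 ≤ a)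
    (hνmin : 0 < νmin) (hν₀a : νmin ≤ ν₀) (hν₀b : ν₀ ≤ νbar)
    (hδ0 : 0 < δ) (hδ1 : δ ≤ 1) (hτ : δ ≤ τ)
    (hpmin : 0 < pmin) (hpmin' : pmin < 1 / 2) (hκ : 1 + δ < κ)
    -- iterates and regularization sequences
    (x xhat : ℕ → EuclideanSpace ℝ (Fin n)) (ν rbar μ : ℕ → ℝ)
    (hν0 : ν 0 = ν₀) (hrbar0 : rbar 0 = ‖resid f φ (x 0)‖)
    (hμ : ∀ k, μ k = ν k * rbar k ^ δ)
    -- Λ_k, H_k + μ_k I =: G_k, the models q_k, q̂_k, and the subproblem residual R_k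
    (Λ : ℕ → ℝ)
    (hΛ : ∀ k, Λ k = a * max (-(lambdaMin (fderiv ℝ (gradient ψ) (A (x k) - b)))) 0)
    (G : ℕ → EuclideanSpace ℝ (Fin n) →L[ℝ] EuclideanSpace ℝ (Fin n))
    (hG : ∀ k, G k = fderiv ℝ (gradient f) (x k)
        + Λ k • ((ContinuousLinearMap.adjoint A).comp A)
        + μ k • ContinuousLinearMap.id ℝ (EuclideanSpace ℝ (Fin n)))
    (q qhat : ℕ → EuclideanSpace ℝ (Fin n) → ℝ)
    (hq : ∀ k y, q k y = f (x k) + ⟪gradient f (x k), y - x k⟫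
        + (1 / 2) * ⟪y - x k, (fderiv ℝ (gradient f) (x k)) (y - x k)⟫ + φ y)
    (hqhat : ∀ k y, qhat k y = f (x k) + ⟪gradient f (x k), y - x k⟫
        + (1 / 2) * ⟪y - x k, (G k) (y - x k)⟫ + φ y)
    (R : ℕ → EuclideanSpace ℝ (Fin n) → EuclideanSpace ℝ (Fin n))
    (hR : ∀ k y, R k y = y - proxPt φ (y - gradient f (x k) - (G k) (y - x k)))
    -- the inexactness criteria satisfied by x̂ᵏ
    (hinex1 : ∀ k, ‖R k (xhat k)‖ ≤
        θ * min ‖resid f φ (x k)‖ (‖resid f φ (x k)‖ ^ (1 + τ)))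
    (hinex2 : ∀ k, α * μ k / 2 * ‖xhat k - x k‖ ^ 2 ≤ F (x k) - qhat k (xhat k))
    -- dᵏ, pred_k, ared_k, ρ_k
    (d : ℕ → EuclideanSpace ℝ (Fin n)) (hd : ∀ k, d k = xhat k - x k)
    (pred ared ρ : ℕ → ℝ)
    (hpred : ∀ k, pred k = F (x k) - q k (xhat k))
    (hared : ∀ k, ared k = F (x k) - F (xhat k))
    (hρ : ∀ k, ρ k = ared k / pred k)
    -- update rules (unsuccessful / successful / highly successful iterations)
    (unsucc : ℕ → Prop)
    (hunsucc : ∀ k, unsucc k ↔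
        pred k ≤ pmin * (1 - θ) * ‖d k‖ *
          min ‖resid f φ (x k)‖ (‖resid f φ (x k)‖ ^ κ) ∨ ρ k ≤ c₁)
    (hupd : ∀ k,
        (unsucc k → x (k + 1) = x k ∧ ν (k + 1) = σ₂ * ν k) ∧
        (¬unsucc k → x (k + 1) = xhat k ∧
          (ρ k ≤ c₂ → ν (k + 1) = min (ν k) νbar) ∧
          (c₂ < ρ k → ν (k + 1) = min (max (σ₁ * ν k) νmin) νbar)))
    (hrbarupd : ∀ k,
        (‖resid f φ (x (k + 1))‖ ≤ η * rbar k → rbar (k + 1) = ‖resid f φ (x (k + 1))‖) ∧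
        (¬‖resid f φ (x (k + 1))‖ ≤ η * rbar k → rbar (k + 1) = rbar k))
    -- no iterate is stationary (otherwise the algorithm terminates)
    (hrne : ∀ k, resid f φ (x k) ≠ 0)
    -- the index set K
    (K : Set ℕ)
    (hK : K = {0} ∪ {k | 1 ≤ k ∧ ‖resid f φ (x k)‖ ≤ η * rbar (k - 1)})
    -- local assumptions: X* = set of strongly stationary points, x* an accumulation
    -- point of {xᵏ}_{k∈K} lying in X*
    (Xstar : Set (EuclideanSpace ℝ (Fin n)))
    (hXstar : Xstar = {y | -gradient f y ∈ subdiff φ y ∧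
        ∀ u, 0 ≤ ⟪(fderiv ℝ (gradient ψ) (A y - b)) u, u⟫})
    (hXne : Xstar.Nonempty)
    (xstar : EuclideanSpace ℝ (Fin n)) (hxstar : xstar ∈ Xstar)
    (hacc : MapClusterPt xstar (atTop ⊓ 𝓟 K) x)
    -- local Lipschitz continuity of ∇²ψ near x*
    (ε Lψ : ℝ) (hε : 0 < ε) (hLψ : 0 < Lψ)
    (hlipψ : ∀ u ∈ closedBall xstar ε, ∀ v ∈ closedBall xstar ε,
      ‖fderiv ℝ (gradient ψ) (A u - b) - fderiv ℝ (gradient ψ) (A v - b)‖ ≤ Lψ * ‖A u - A v‖)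
    -- Hölderian local error bound of order qq on X*
    (β qq : ℝ) (hβ : 0 < β) (hqq : max δ (1 - δ) < qq)
    (herrbd : ∀ y ∈ closedBall xstar ε, β * infDist y Xstar ≤ ‖resid f φ y‖ ^ qq)
    -- derived constants: ε₀, L = ‖A‖³Lψ, and a Lipschitz constant L_g of ∇f on B_{ε₀}(x*)
    (ε₀ L Lg : ℝ) (hε₀ : ε₀ = min ε (ε / ‖A‖)) (hL : L = ‖A‖ ^ 3 * Lψ) (hLg : 0 < Lg)
    (hlipg : ∀ u ∈ closedBall xstar ε₀, ∀ v ∈ closedBall xstar ε₀,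
      ‖gradient f u - gradient f v‖ ≤ Lg * ‖u - v‖)
    (c ε₂ chat ctilde : ℝ)
    (hc : c = νmin⁻¹ * θ * (2 + Lg) ^ (1 + τ - δ) * (1 + Lg + a * L + νbar * (2 + Lg) ^ δ)
        + (L + 2 * a * L) / (2 * νmin * β) + 2)
    (hε₂ : ε₂ = min (1 / (2 + Lg)) (min (1 / (a * Lψ * ‖A‖)) (ε₀ / (1 + c))))
    (hchat : chat = (c ^ 2 * L + 2 * a * c * Lψ * ‖A‖ ^ 3 + 2 * β * c * νbar) / (2 * β ^ 2) + θ)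
    (hctilde : ctilde = (1 / β) *
        (c ^ 2 * L / 2 + a * c * Lψ * ‖A‖ ^ 3 + c * νbar * (2 + Lg) ^ δ
          + θ * (2 + Lg) ^ (1 + τ)) ^ qq) :
    ∀ k ∈ K, x k ∈ closedBall xstar ε₂ →
      ‖resid f φ (xhat k)‖ ≤ chat * ‖resid f φ (x k)‖ ^ min (δ + qq) (1 + τ) ∧
      infDist (xhat k) Xstar ≤ ctilde * infDist (x k) Xstar ^ ((1 + δ) * qq) := by
  intro k hkK hxk
  obtain ⟨hgc, hsym, hHess⟩ := aux_grad ψ A b hψ f hf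
  have hφc : Continuous φ := hφ.locallyLipschitz.continuous
  have hxs := hxstar
  rw [hXstar] at hxs
  have hprox := aux_prox φ hφ hφc xstar _ hxs.1
  have hfd : Differentiable ℝ (gradient f) := fun y => (hHess y).differentiableAt
  have hHe : ∀ y, fderiv ℝ (gradient f) y =
      (ContinuousLinearMap.adjoint A).comp ((fderiv ℝ (gradient ψ) (A y - b)).comp A) :=
    fun y => (hHess y).fderiv
  -- residual facts
  have hr0 : ∀ y ∈ Xstar, resid f φ y = 0 := by
    intro y hy
    rw [hXstar] at hy
    have h1 := aux_nonexp φ _ _ y (y - gradient f y) (hprox (y - gradient f y))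
      (by rw [sub_sub_cancel_left]; exact hy.1)
    rw [sub_self, norm_zero] at h1
    have h2 := norm_le_zero_iff.1 h1
    unfold resid
    rw [← neg_sub, h2, neg_zero]
  -- sequence facts
  have hrpos : ∀ j, 0 < ‖resid f φ (x j)‖ := fun j => norm_pos_iff.2 (hrne j)
  obtain ⟨hrb, hνge, hνle⟩ := aux_seq σ₁ σ₂ η νmin ν₀ νbar c₂ hσ₂ hη hη' hνmin hν₀a hν₀b ν rbar ρ
    (fun j => ‖resid f φ (x j)‖) hrpos hν0 hrbar0 unsucc
    (fun j hj => ⟨by simp only [((hupd j).1 hj).1], ((hupd j).1 hj).2⟩)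
    (fun j hj => ((hupd j).2 hj).2) hrbarupd k (by rw [hK] at hkK; simpa using hkK)
  set r := ‖resid f φ (x k)‖ with hr
  have hrp : 0 < r := hrpos k
  set X := x k with hX
  set D := infDist X Xstar with hD
  have hD0 : 0 ≤ D := infDist_nonneg
  -- A nonzero, constants positive
  have hνbar : 0 < νbar := by linarith
  have hA0 : 0 ≤ ‖A‖ := norm_nonneg A
  have hL0 : 0 ≤ L := by rw [hL]; positivity
  have hc2 : 2 ≤ c := by
    rw [hc]
    have h1 : 0 ≤ νmin⁻¹ * θ * (2 + Lg) ^ (1 + τ - δ) * (1 + Lg + a * L + νbar * (2 + Lg) ^ δ) := by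
      positivity
    have h2 : 0 ≤ (L + 2 * a * L) / (2 * νmin * β) := by positivity
    linarith
  rw [mem_closedBall, dist_eq_norm] at hxk
  have hε₂0 : 0 < ε₂ := by
    rcases eq_or_lt_of_le ((norm_nonneg _).trans hxk) with h | h
    · exfalso
      rw [← h] at hxk
      have : X = xstar := sub_eq_zero.1 (norm_le_zero_iff.1 hxk)
      exact hrne k (by rw [← hX, this]; exact hr0 _ hxstar)
    · exact h
  have hε₂a : ε₂ ≤ 1 / (2 + Lg) := by rw [hε₂]; exact min_le_left _ _
  have hε₂c : ε₂ * (1 + c) ≤ ε₀ := by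
    have : ε₂ ≤ ε₀ / (1 + c) := by rw [hε₂]; exact (min_le_right _ _).trans (min_le_right _ _)
    rwa [le_div_iff₀ (by linarith)] at this
  have hε₀ε : ε₀ ≤ ε := by rw [hε₀]; exact min_le_left _ _
  have hDε : D ≤ ε₂ := (infDist_le_dist_of_mem hxstar).trans (by rw [dist_eq_norm]; exact hxk)
  have hDLg : (2 + Lg) * D ≤ 1 := by
    have := hDε.trans hε₂a
    rw [le_div_iff₀ (by linarith)] at this; linarith
  have hD1 : D ≤ 1 := by
    have h1 : 0 ≤ Lg * D := mul_nonneg hLg.le hD0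
    linarith
  have h2ε₂ : 2 * ε₂ < ε₀ := by
    have h1 : ε₂ * 2 ≤ ε₂ * c := mul_le_mul_of_nonneg_left hc2 hε₂0.le
    linarith
  have hcD : c * D ≤ c * ε₂ := mul_le_mul_of_nonneg_left hDε (by linarith)
  -- closedness and projection
  have hclosed : IsClosed Xstar := by
    have hgfc : Continuous (gradient f) := hfd.continuous
    have hAc : Continuous fun y => fderiv ℝ (gradient ψ) (A y - b) :=
      (hgc.continuous_fderiv (by norm_num)).comp (by fun_prop)
    have e : Xstar = (⋂ z, {y | φ y + ⟪-gradient f y, z - y⟫ ≤ φ z}) ∩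
        ⋂ u, {y | 0 ≤ ⟪(fderiv ℝ (gradient ψ) (A y - b)) u, u⟫} := by
      rw [hXstar]; ext y; simp [subdiff]
    rw [e]
    refine (isClosed_iInter fun z => isClosed_le ?_ continuous_const).inter
      (isClosed_iInter fun u => isClosed_le continuous_const ?_)
    · exact hφc.add (hgfc.neg.inner (by fun_prop))
    · exact (hAc.clm_apply continuous_const).inner continuous_const
  obtain ⟨xb, hxbm, hxbd⟩ := hclosed.exists_infDist_eq_dist hXne X
  have hxbD : ‖xb - X‖ = D := by rw [hD, hxbd, dist_comm, dist_eq_norm]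
  have hXball0 : X ∈ closedBall xstar ε₀ := by
    rw [mem_closedBall, dist_eq_norm]; linarith
  have hxbball0 : xb ∈ closedBall xstar ε₀ := by
    rw [mem_closedBall, dist_eq_norm]
    have : xb - xstar = (xb - X) + (X - xstar) := by abel
    have h2 := norm_add_le (xb - X) (X - xstar)
    rw [← this] at h2
    linarith
  have hsub := closedBall_subset_closedBall (x := xstar) hε₀ε
  have hxb := hxbm
  rw [hXstar] at hxb
  -- r ≤ (2+Lg) D
  have hrD : r ≤ (2 + Lg) * D := by
    have h1 := aux_nonexp φ _ _ xb (xb - gradient f xb) (hprox (X - gradient f X))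
      (by rw [sub_sub_cancel_left]; exact hxb.1)
    have h2 : resid f φ X = (X - xb) - (proxPt φ (X - gradient f X) - xb) := by
      unfold resid; abel
    have h3 : X - gradient f X - (xb - gradient f xb) =
      (X - xb) - (gradient f X - gradient f xb) := by abel
    have h4 := hlipg X hXball0 xb hxbball0
    rw [h3] at h1
    have h5 := norm_sub_le (X - xb) (gradient f X - gradient f xb)
    have h6 := norm_sub_le (X - xb) (proxPt φ (X - gradient f X) - xb)
    rw [← h2, ← hr] at h6
    rw [norm_sub_rev X xb, hxbD] at *
    linarith
  have hr1 : r ≤ 1 := hrD.trans hDLg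
  have herr : β * D ≤ r ^ qq := herrbd X (hsub hXball0)
  have hqδ : δ < qq := (le_max_left _ _).trans_lt hqq
  have hqpos : 0 < qq := hδ0.trans hqδ
  have hDδ : β * D ≤ r ^ δ := herr.trans (Real.rpow_le_rpow_of_exponent_ge hrp hr1 hqδ.le)
  -- μ
  have hμk : μ k = ν k * r ^ δ := by rw [hμ, hrb]
  have hrδ : 0 < r ^ δ := Real.rpow_pos_of_pos hrp δ
  have hμge : νmin * r ^ δ ≤ μ k := by rw [hμk]; gcongr
  have hμle : μ k ≤ νbar * r ^ δ := by rw [hμk]; gcongr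
  have hμpos : 0 < μ k := lt_of_lt_of_le (by positivity) hμge
  -- Λ
  have hΛle : Λ k ≤ a * (Lψ * ‖A‖ * D) := by
    rw [hΛ]
    have h1 := aux_lambda_ge (fderiv ℝ (gradient ψ) (A X - b)) _ hxb.2
    have h2 := hlipψ X (hsub hXball0) xb (hsub hxbball0)
    have h3 : ‖A X - A xb‖ ≤ ‖A‖ * D := by
      rw [← map_sub, ← hxbD, norm_sub_rev xb X]; exact A.le_opNorm _
    refine mul_le_mul_of_nonneg_left (h1.trans (h2.trans ?_)) (by linarith)
    rw [mul_assoc]; gcongr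
  have hΛ0 : 0 ≤ Λ k := by rw [hΛ]; exact mul_nonneg (by linarith) (le_max_right _ _)
  have hΛψ : ∀ u, 0 ≤ ⟪fderiv ℝ (gradient ψ) (A X - b) u, u⟫ + Λ k * ‖u‖ ^ 2 := by
    intro u
    have h1 := aux_lambda (fderiv ℝ (gradient ψ) (A X - b)) u
    have h2 : -(lambdaMin (fderiv ℝ (gradient ψ) (A X - b))) ≤ Λ k := by
      rw [hΛ]
      have h3 := le_max_left (-(lambdaMin (fderiv ℝ (gradient ψ) (A X - b)))) 0
      have h4 := le_max_right (-(lambdaMin (fderiv ℝ (gradient ψ) (A X - b)))) 0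
      refine h3.trans ?_
      exact le_mul_of_one_le_left h4 ha
    have h5 := mul_le_mul_of_nonneg_right h2 (sq_nonneg ‖u‖)
    linarith
  -- G
  have hGapp : ∀ u, G k u = fderiv ℝ (gradient f) X u +
      Λ k • (ContinuousLinearMap.adjoint A) (A u) + μ k • u := by
    intro u; rw [hG]; rfl
  have hHin : ∀ u w, ⟪fderiv ℝ (gradient f) X u, w⟫ =
      ⟪fderiv ℝ (gradient ψ) (A X - b) (A u), A w⟫ := by
    intro u w
    rw [hHe]
    simp only [ContinuousLinearMap.comp_apply, ContinuousLinearMap.adjoint_inner_left]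
  have hGin : ∀ u w, ⟪G k u, w⟫ = ⟪fderiv ℝ (gradient ψ) (A X - b) (A u), A w⟫ +
      Λ k * ⟪A u, A w⟫ + μ k * ⟪u, w⟫ := by
    intro u w
    rw [hGapp, inner_add_left, inner_add_left, hHin, inner_smul_left, inner_smul_left,
      ContinuousLinearMap.adjoint_inner_left]
    simp
  have hGsym : ∀ u w, ⟪G k u, w⟫ = ⟪G k w, u⟫ := by
    intro u w
    rw [hGin, hGin, hsym, real_inner_comm (A u) (A w), real_inner_comm u w]
  have hGpos : ∀ u, μ k * ‖u‖ ^ 2 ≤ ⟪G k u, u⟫ := by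
    intro u
    have := hΛψ (A u)
    rw [hGin, real_inner_self_eq_norm_sq, real_inner_self_eq_norm_sq]
    linarith
  have hAA : ∀ u, ‖(ContinuousLinearMap.adjoint A) (A u)‖ ≤ ‖A‖ ^ 2 * ‖u‖ := by
    intro u
    have h1 := (ContinuousLinearMap.adjoint A).le_opNorm (A u)
    rw [LinearIsometryEquiv.norm_map] at h1
    have h2 := A.le_opNorm u
    calc _ ≤ ‖A‖ * (‖A‖ * ‖u‖) := h1.trans (by gcongr)
      _ = _ := by ring
  have hΛAA : ∀ u, ‖Λ k • (ContinuousLinearMap.adjoint A) (A u)‖ ≤ a * L * D * ‖u‖ := by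
    intro u
    rw [norm_smul, Real.norm_of_nonneg hΛ0]
    calc _ ≤ a * (Lψ * ‖A‖ * D) * (‖A‖ ^ 2 * ‖u‖) := by
          have := hAA u
          gcongr
      _ = _ := by rw [hL]; ring
  have hHLg : ‖fderiv ℝ (gradient f) X‖ ≤ Lg := by
    refine (hfd X).hasFDerivAt.le_of_lip' hLg.le ?_
    have hb : ball X (ε₀ - ε₂) ∈ nhds X := ball_mem_nhds X (by linarith)
    filter_upwards [hb] with y hy
    refine hlipg y ?_ X hXball0
    rw [mem_ball, dist_eq_norm] at hy
    rw [mem_closedBall, dist_eq_norm]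
    have : y - xstar = (y - X) + (X - xstar) := by abel
    rw [this]
    refine (norm_add_le _ _).trans ?_
    linarith
  have hGnorm : ‖G k‖ ≤ Lg + a * L * D + μ k := by
    refine ContinuousLinearMap.opNorm_le_bound _ (by positivity) fun u => ?_
    rw [hGapp]
    have h1 := (fderiv ℝ (gradient f) X).le_of_opNorm_le hHLg u
    have h2 := hΛAA u
    have h3 : ‖μ k • u‖ = μ k * ‖u‖ := by rw [norm_smul, Real.norm_of_nonneg hμpos.le]
    have h4 := norm_add₃_le (a := fderiv ℝ (gradient f) X u)
      (b := Λ k • (ContinuousLinearMap.adjoint A) (A u)) (c := μ k • u)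
    linarith
  -- Taylor
  have hHlip : ∀ u ∈ closedBall xstar ε, ∀ v ∈ closedBall xstar ε,
      ‖fderiv ℝ (gradient f) u - fderiv ℝ (gradient f) v‖ ≤ L * ‖u - v‖ := by
    intro u hu v hv
    have h1 := hlipψ u hu v hv
    have h2 : ‖A u - A v‖ ≤ ‖A‖ * ‖u - v‖ := by rw [← map_sub]; exact A.le_opNorm _
    set T := fderiv ℝ (gradient ψ) (A u - b) - fderiv ℝ (gradient ψ) (A v - b) with hT
    have e : fderiv ℝ (gradient f) u - fderiv ℝ (gradient f) v =
        (ContinuousLinearMap.adjoint A).comp (T.comp A) := by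
      rw [hHe, hHe]; ext1 w; simp [hT]
    rw [e]
    have h3 := (ContinuousLinearMap.adjoint A).opNorm_comp_le (T.comp A)
    have h4 := T.opNorm_comp_le A
    rw [LinearIsometryEquiv.norm_map] at h3
    calc _ ≤ ‖A‖ * (‖T‖ * ‖A‖) := h3.trans (by gcongr)
      _ ≤ ‖A‖ * ((Lψ * (‖A‖ * ‖u - v‖)) * ‖A‖) := by
          have := h1.trans (mul_le_mul_of_nonneg_left h2 hLψ.le)
          gcongr
      _ = _ := by rw [hL]; ring
  have hTaylor : ∀ y ∈ closedBall xstar ε,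
      ‖gradient f y - gradient f X - G k (y - X)‖ ≤
        L / 2 * ‖y - X‖ ^ 2 + a * L * D * ‖y - X‖ + μ k * ‖y - X‖ := by
    intro y hy
    have h1 := aux_taylor (gradient f) hfd (closedBall xstar ε) (convex_closedBall _ _) L hHlip X y
      (hsub hXball0) hy
    have h2 := hΛAA (y - X)
    have h3 : ‖μ k • (y - X)‖ = μ k * ‖y - X‖ := by rw [norm_smul, Real.norm_of_nonneg hμpos.le]
    have e : gradient f y - gradient f X - G k (y - X) =
        (gradient f y - gradient f X - fderiv ℝ (gradient f) X (y - X))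
        - Λ k • (ContinuousLinearMap.adjoint A) (A (y - X)) - μ k • (y - X) := by
      rw [hGapp]; abel
    rw [e]
    refine (norm_sub_le _ _).trans ?_
    have h4 := norm_sub_le (gradient f y - gradient f X - fderiv ℝ (gradient f) X (y - X))
      (Λ k • (ContinuousLinearMap.adjoint A) (A (y - X)))
    linarith
  -- bound on d
  obtain ⟨xt, hxt⟩ := aux_quad_exists φ hφ hφc xstar _ hxs.1 (G k) hGsym (μ k) hμpos hGpos
    (gradient f X) X
  have hRsub : R k (xhat k) - (gradient f X + G k (xhat k - X)) ∈
      subdiff φ (xhat k - R k (xhat k)) := by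
    have h1 := hprox (xhat k - gradient f X - G k (xhat k - X))
    have e : xhat k - R k (xhat k) = proxPt φ (xhat k - gradient f X - G k (xhat k - X)) := by
      rw [hR, sub_sub_cancel]
    have e2 : R k (xhat k) - (gradient f X + G k (xhat k - X)) =
        xhat k - gradient f X - G k (xhat k - X) -
          proxPt φ (xhat k - gradient f X - G k (xhat k - X)) := by
      rw [← e]; abel
    rw [e, e2]; exact h1
  have hRle : ‖R k (xhat k)‖ ≤ θ * r ^ (1 + τ) :=
    (hinex1 k).trans (mul_le_mul_of_nonneg_left (min_le_right _ _) hθ.le)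
  have he1 := aux_inexact φ (G k) (μ k) hμpos hGpos _ _ _ _ _ hxt hRsub
  have he2 := aux_exact φ (G k) (μ k) hμpos hGpos _ _ _ _ _ hxt hxb.1
  have he3 := hTaylor xb (hsub hxbball0)
  rw [hxbD] at he3
  have hrδD : r ^ δ ≤ (2 + Lg) ^ δ * D ^ δ := by
    rw [← Real.mul_rpow (by linarith) hD0]
    exact Real.rpow_le_rpow hrp.le hrD hδ0.le
  have hτ0 : 0 < τ := hδ0.trans_le hτ
  have hDδ1 : D ^ δ ≤ 1 := Real.rpow_le_one hD0 hD1 hδ0.le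
  have hbd1 : ‖xhat k - xt‖ ≤
      νmin⁻¹ * θ * (2 + Lg) ^ (1 + τ - δ) * (1 + Lg + a * L + νbar * (2 + Lg) ^ δ) * D := by
    set M := 1 + Lg + a * L + νbar * (2 + Lg) ^ δ with hM
    have hM0 : 0 ≤ M := by positivity
    have h1 : 1 + ‖G k‖ ≤ M := by
      have h2 : a * L * D ≤ a * L := mul_le_of_le_one_right (by positivity) hD1
      have h3 : μ k ≤ νbar * (2 + Lg) ^ δ := by
        refine hμle.trans (mul_le_mul_of_nonneg_left (hrδD.trans ?_) hνbar.le)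
        exact mul_le_of_le_one_right (by positivity) hDδ1
      linarith
    have h2 : r ^ (1 + τ) = r ^ δ * r ^ (1 + τ - δ) := by
      rw [← Real.rpow_add hrp]; congr 1; ring
    have h3 : r ^ (1 + τ - δ) ≤ (2 + Lg) ^ (1 + τ - δ) * D := by
      calc r ^ (1 + τ - δ) ≤ ((2 + Lg) * D) ^ (1 + τ - δ) :=
            Real.rpow_le_rpow hrp.le hrD (by linarith)
        _ = (2 + Lg) ^ (1 + τ - δ) * D ^ (1 + τ - δ) := Real.mul_rpow (by linarith) hD0
        _ ≤ (2 + Lg) ^ (1 + τ - δ) * D := by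
            have : D ^ (1 + τ - δ) ≤ D ^ (1 : ℝ) :=
              Real.rpow_le_rpow_of_exponent_ge' hD0 hD1 zero_le_one (by linarith)
            rw [Real.rpow_one] at this
            gcongr
    have h4 : νmin * r ^ δ * ‖xhat k - xt‖ ≤ M * (θ * (r ^ δ * ((2 + Lg) ^ (1 + τ - δ) * D))) := by
      calc _ ≤ μ k * ‖xhat k - xt‖ := by gcongr
        _ ≤ (1 + ‖G k‖) * ‖R k (xhat k)‖ := he1
        _ ≤ M * (θ * r ^ (1 + τ)) := by gcongr
        _ ≤ _ := by rw [h2]; gcongr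
    have h5 : ‖xhat k - xt‖ ≤ M * (θ * (r ^ δ * ((2 + Lg) ^ (1 + τ - δ) * D))) / (νmin * r ^ δ) := by
      rw [le_div_iff₀ (by positivity)]; linarith
    refine h5.trans (le_of_eq ?_)
    field_simp
  have hbd2 : ‖xt - xb‖ ≤ (L + 2 * a * L) / (2 * νmin * β) * D + D := by
    have h1 : μ k * (‖xt - xb‖ - D) ≤ (L + 2 * a * L) / 2 * D ^ 2 := by
      have := he2.trans he3; linarith
    by_cases hneg : ‖xt - xb‖ - D ≤ 0
    · have : 0 ≤ (L + 2 * a * L) / (2 * νmin * β) * D := by positivity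
      linarith
    · push Not at hneg
      have h2 : νmin * (β * D) * (‖xt - xb‖ - D) ≤ (L + 2 * a * L) / 2 * D ^ 2 := by
        refine le_trans ?_ h1
        gcongr
        exact (mul_le_mul_of_nonneg_left hDδ hνmin.le).trans hμge
      have hDp : 0 < D := by
        rcases eq_or_lt_of_le hD0 with h | h
        · rw [← h] at hrD; linarith
        · exact h
      have h3 : ‖xt - xb‖ - D ≤ (L + 2 * a * L) / 2 * D ^ 2 / (νmin * (β * D)) := by
        rw [le_div_iff₀ (by positivity)]; linarith
      have h4 : (L + 2 * a * L) / 2 * D ^ 2 / (νmin * (β * D)) =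
          (L + 2 * a * L) / (2 * νmin * β) * D := by field_simp
      linarith
  have hd' : ‖xhat k - X‖ ≤ c * D := by
    have e : xhat k - X = (xhat k - xt) + (xt - xb) + (xb - X) := by abel
    have h1 := norm_add₃_le (a := xhat k - xt) (b := xt - xb) (c := xb - X)
    rw [← e, hxbD] at h1
    rw [hc]
    linarith
  have hxhball : xhat k ∈ closedBall xstar ε := by
    refine hsub ?_
    rw [mem_closedBall, dist_eq_norm]
    have e : xhat k - xstar = (xhat k - X) + (X - xstar) := by abel
    have h1 := norm_add_le (xhat k - X) (X - xstar)
    rw [← e] at h1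
    linarith
  -- residual at xhat
  have hres : ‖resid f φ (xhat k)‖ ≤ θ * r ^ (1 + τ) +
      (c ^ 2 * L / 2 + a * c * L) * D ^ 2 + c * νbar * (r ^ δ * D) := by
    have h1 := aux_nonexp φ _ _ _ _ (hprox (xhat k - gradient f (xhat k)))
      (hprox (xhat k - gradient f X - G k (xhat k - X)))
    set P := proxPt φ (xhat k - gradient f (xhat k))
    set Q := proxPt φ (xhat k - gradient f X - G k (xhat k - X)) with hQ
    have e1 : resid f φ (xhat k) = R k (xhat k) - (P - Q) := by
      rw [hR, ← hX, ← hQ]; unfold resid; abel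
    have e2 : xhat k - gradient f (xhat k) - (xhat k - gradient f X - G k (xhat k - X)) =
        -(gradient f (xhat k) - gradient f X - G k (xhat k - X)) := by abel
    rw [e2, norm_neg] at h1
    have h2 := hTaylor _ hxhball
    have h3 := norm_sub_le (R k (xhat k)) (P - Q)
    rw [← e1] at h3
    have h4 : L / 2 * ‖xhat k - X‖ ^ 2 ≤ L / 2 * (c * D) ^ 2 := by gcongr
    have h5 : a * L * D * ‖xhat k - X‖ ≤ a * L * D * (c * D) := by gcongr
    have h6 : μ k * ‖xhat k - X‖ ≤ νbar * r ^ δ * (c * D) := by gcongr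
    calc _ ≤ θ * r ^ (1 + τ) + (L / 2 * (c * D) ^ 2 + a * L * D * (c * D) +
          νbar * r ^ δ * (c * D)) := by linarith
      _ = _ := by ring
  have hc0 : 0 < c := by linarith
  constructor
  · have hDq : D ≤ r ^ qq / β := by rw [le_div_iff₀ hβ]; linarith
    set e := min (δ + qq) (1 + τ)
    have h1 : r ^ (1 + τ) ≤ r ^ e := Real.rpow_le_rpow_of_exponent_ge hrp hr1 (min_le_right _ _)
    have h2 : r ^ (δ + qq) ≤ r ^ e := Real.rpow_le_rpow_of_exponent_ge hrp hr1 (min_le_left _ _)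
    have h3 : D ^ 2 ≤ r ^ e / β ^ 2 := by
      calc D ^ 2 ≤ (r ^ qq / β) ^ 2 := by gcongr
        _ = r ^ (qq + qq) / β ^ 2 := by rw [Real.rpow_add hrp]; ring
        _ ≤ r ^ (δ + qq) / β ^ 2 := by
            have := Real.rpow_le_rpow_of_exponent_ge hrp hr1 (by linarith : δ + qq ≤ qq + qq)
            gcongr
        _ ≤ _ := by gcongr
    have h4 : r ^ δ * D ≤ r ^ e / β := by
      calc r ^ δ * D ≤ r ^ δ * (r ^ qq / β) := by gcongr
        _ = r ^ (δ + qq) / β := by rw [Real.rpow_add hrp]; ring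
        _ ≤ _ := by gcongr
    refine hres.trans ?_
    calc _ ≤ θ * r ^ e + (c ^ 2 * L / 2 + a * c * L) * (r ^ e / β ^ 2)
          + c * νbar * (r ^ e / β) := by gcongr
      _ = chat * r ^ e := by rw [hchat, hL]; field_simp; ring
  · have hDp : 0 < D := by
      rcases eq_or_lt_of_le hD0 with h | h
      · rw [← h] at hrD; linarith
      · exact h
    have h1 : r ^ (1 + τ) ≤ (2 + Lg) ^ (1 + τ) * D ^ (1 + δ) := by
      calc r ^ (1 + τ) ≤ ((2 + Lg) * D) ^ (1 + τ) := Real.rpow_le_rpow hrp.le hrD (by linarith)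
        _ = (2 + Lg) ^ (1 + τ) * D ^ (1 + τ) := Real.mul_rpow (by linarith) hD0
        _ ≤ _ := by
          have := Real.rpow_le_rpow_of_exponent_ge hDp hD1 (by linarith : 1 + δ ≤ 1 + τ)
          gcongr
    have h2 : D ^ 2 ≤ D ^ (1 + δ) := by
      rw [← Real.rpow_two]
      exact Real.rpow_le_rpow_of_exponent_ge hDp hD1 (by linarith)
    have h3 : r ^ δ * D ≤ (2 + Lg) ^ δ * D ^ (1 + δ) := by
      calc r ^ δ * D ≤ (2 + Lg) ^ δ * D ^ δ * D := by gcongr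
        _ = _ := by rw [Real.rpow_add hDp, Real.rpow_one]; ring
    set S := c ^ 2 * L / 2 + a * c * Lψ * ‖A‖ ^ 3 + c * νbar * (2 + Lg) ^ δ
          + θ * (2 + Lg) ^ (1 + τ) with hS
    have hS0 : 0 ≤ S := by positivity
    have h4 : ‖resid f φ (xhat k)‖ ≤ S * D ^ (1 + δ) := by
      refine hres.trans ?_
      calc _ ≤ θ * ((2 + Lg) ^ (1 + τ) * D ^ (1 + δ)) + (c ^ 2 * L / 2 + a * c * L) * D ^ (1 + δ)
            + c * νbar * ((2 + Lg) ^ δ * D ^ (1 + δ)) := by gcongr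
        _ = _ := by rw [hS, hL]; ring
    have h5 := herrbd _ hxhball
    have h6 : ‖resid f φ (xhat k)‖ ^ qq ≤ S ^ qq * D ^ ((1 + δ) * qq) := by
      calc _ ≤ (S * D ^ (1 + δ)) ^ qq := Real.rpow_le_rpow (norm_nonneg _) h4 hqpos.le
        _ = _ := by rw [Real.mul_rpow hS0 (by positivity), ← Real.rpow_mul hD0]
    have h7 : infDist (xhat k) Xstar ≤ S ^ qq * D ^ ((1 + δ) * qq) / β := by
      rw [le_div_iff₀ hβ]; linarith
    refine h7.trans (le_of_eq ?_)
    rw [hctilde]; ring
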